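/- Independence for l-entailment: Let K be a consistent statistical ALC knowledge base and (C|D)[ℓ,u] a conditional. Then K ⊨_l (C|D)[ℓ,u] if and only if {κ ∈ K : κ ⇌* (C|D)[ℓ,u]} ⊨_l (C|D)[ℓ,u], where {κ ∈ K : κ ⇌* (C|D)[ℓ,u]} is the restriction of K to the conditionals connected to (C|D)[ℓ,u]. -/

import Mathlib

open scoped Classical

/-- ALC concepts over concept names and role names (both drawn from ℕ,
regarded as disjoint name spaces). -/
inductive Cpt : Type where
  | top : Cpt
  | atom : ℕ → Cpt
  | neg : Cpt → Cpt
  | inter : Cpt → Cpt → Cpt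
  | ex : ℕ → Cpt → Cpt
deriving DecidableEq

/-- A finite interpretation with domain drawn from the type `α`. -/
structure Interp (α : Type) where
  dom : Finset α
  dom_nonempty : dom.Nonempty
  conc : ℕ → Finset α
  conc_sub : ∀ a, conc a ⊆ dom
  role : ℕ → Finset (α × α)
  role_sub : ∀ r, role r ⊆ dom ×ˢ dom

/-- The extension `C^I` of a concept. -/
noncomputable def Interp.ext {α : Type} (I : Interp α) : Cpt → Finset α
  | .top => I.dom
  | .atom a => I.conc a
  | .neg c => I.dom \ I.ext c
  | .inter c d => I.ext c ∩ I.ext d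
  | .ex r c => I.dom.filter (fun d => ∃ e ∈ I.ext c, (d, e) ∈ I.role r)

/-- `[C]^I`, the cardinality of the extension of `C`. -/
noncomputable def cardC {α : Type} (I : Interp α) (c : Cpt) : ℕ := (I.ext c).card

/-- A probabilistic conditional `(C|D)[l,u]`. -/
structure Cond : Type where
  C : Cpt
  D : Cpt
  l : ℚ
  u : ℚ
deriving DecidableEq

/-- `I ⊨ (C|D)[l,u]` iff `[D]^I = 0` or `l ≤ [C ⊓ D]^I/[D]^I ≤ u`. -/
def satCond {α : Type} (I : Interp α) (κ : Cond) : Prop :=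
  cardC I κ.D = 0 ∨
    (κ.l ≤ (cardC I (.inter κ.C κ.D) : ℚ) / (cardC I κ.D : ℚ) ∧
     (cardC I (.inter κ.C κ.D) : ℚ) / (cardC I κ.D : ℚ) ≤ κ.u)

/-- Finite interpretations (with domain drawn from the countable set ℕ). -/
abbrev FInterp := Interp ℕ

/-- The models of a knowledge base (finite set of conditionals). -/
def Models (K : Finset Cond) : Set FInterp := {I | ∀ κ ∈ K, satCond I κ}

/-- l-entailment: every model of `K` satisfies the conditional. -/
def entailsL (K : Finset Cond) (κ : Cond) : Prop := ∀ I ∈ Models K, satCond I κ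

/-- The signature of a concept: its concept names (`Sum.inl`) and role names (`Sum.inr`). -/
def sig : Cpt → Finset (ℕ ⊕ ℕ)
  | .top => ∅
  | .atom a => {Sum.inl a}
  | .neg c => sig c
  | .inter c d => sig c ∪ sig d
  | .ex r c => insert (Sum.inr r) (sig c)

/-- Directly connected: the signatures of the two (qualitative) conditionals overlap. -/
def dconn (p q : Cpt × Cpt) : Prop :=
  ((sig p.1 ∪ sig p.2) ∩ (sig q.1 ∪ sig q.2)).Nonempty

/-- Connected (`⇌*`): transitive closure of `⇌` among the conditionals of the KB
together with the target conditional/query. -/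
def connIn (P : Set (Cpt × Cpt)) : Cpt × Cpt → Cpt × Cpt → Prop :=
  Relation.TransGen (fun p q => dconn p q ∧ p ∈ P ∧ q ∈ P)

/-- `π` is a projection of `M` onto `I` respecting the names in `S`, with fibres of size `k`. -/
structure Proj (M I : FInterp) (S : Set (ℕ ⊕ ℕ)) (π : ℕ → ℕ) (k : ℕ) : Prop where
  pos : 0 < k
  dom : ∀ n ∈ M.dom, π n ∈ I.dom
  fib : ∀ a ∈ I.dom, (M.dom.filter (fun n => π n = a)).card = k
  conc : ∀ a, Sum.inl a ∈ S → ∀ n ∈ M.dom, (n ∈ M.conc a ↔ π n ∈ I.conc a)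
  role : ∀ r, Sum.inr r ∈ S → ∀ n ∈ M.dom, ∀ m ∈ M.dom,
    ((n, m) ∈ M.role r ↔ (π n, π m) ∈ I.role r)

theorem ext_sub (I : FInterp) (c : Cpt) : I.ext c ⊆ I.dom := by
  induction c with
  | top => simp [Interp.ext]
  | atom a => simpa [Interp.ext] using I.conc_sub a
  | neg c ih =>
    intro x hx
    simp only [Interp.ext, Finset.mem_sdiff] at hx
    exact hx.1
  | inter c d ih1 ih2 =>
    intro x hx
    simp only [Interp.ext, Finset.mem_inter] at hx
    exact ih1 hx.1
  | ex r c ih => simp [Interp.ext]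

theorem Proj.ext {M I : FInterp} {S : Set (ℕ ⊕ ℕ)} {π : ℕ → ℕ} {k : ℕ} (h : Proj M I S π k)
    (c : Cpt) (hc : ∀ x ∈ sig c, x ∈ S) : ∀ n ∈ M.dom, (n ∈ M.ext c ↔ π n ∈ I.ext c) := by
  induction c with
  | top => intro n hn; simp [Interp.ext, hn, h.dom n hn]
  | atom a =>
    intro n hn
    simpa [Interp.ext] using h.conc a (hc _ (by simp [sig])) n hn
  | neg c ih =>
    intro n hn
    simp [Interp.ext, hn, h.dom n hn, ih hc n hn]
  | inter c d ih1 ih2 =>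
    intro n hn
    simp only [Interp.ext, Finset.mem_inter]
    rw [ih1 (fun x hx => hc x (by simp [sig, hx])) n hn,
      ih2 (fun x hx => hc x (by simp [sig, hx])) n hn]
  | ex r c ih =>
    intro n hn
    have ih' := ih (fun x hx => hc x (by simp [sig, hx]))
    have hr := h.role r (hc _ (by simp [sig]))
    simp only [Interp.ext, Finset.mem_filter, hn, h.dom n hn, true_and]
    constructor
    · rintro ⟨e, he, hre⟩
      have hed := ext_sub M c he
      exact ⟨π e, (ih' e hed).1 he, (hr n hn e hed).1 hre⟩
    · rintro ⟨a, ha, hra⟩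
      have had := ext_sub I c ha
      have hf : 0 < (M.dom.filter (fun n => π n = a)).card := by
        rw [h.fib a had]; exact h.pos
      obtain ⟨e, he⟩ := Finset.card_pos.1 hf
      obtain ⟨hed, rfl⟩ := Finset.mem_filter.1 he
      exact ⟨e, (ih' e hed).2 ha, (hr n hn e hed).2 hra⟩

theorem Proj.card {M I : FInterp} {S : Set (ℕ ⊕ ℕ)} {π : ℕ → ℕ} {k : ℕ} (h : Proj M I S π k)
    (c : Cpt) (hc : ∀ x ∈ sig c, x ∈ S) : cardC M c = cardC I c * k := by
  have he := h.ext c hc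
  unfold cardC
  rw [Finset.card_eq_sum_card_fiberwise (f := π) (t := I.ext c)
    (fun n hn => (he n (ext_sub M c hn)).1 hn)]
  rw [Finset.sum_congr rfl (g := fun _ => k), Finset.sum_const, smul_eq_mul]
  intro a ha
  rw [← h.fib a (ext_sub I c ha)]
  congr 1
  ext n
  simp only [Finset.mem_filter]
  constructor
  · rintro ⟨h1, h2⟩
    exact ⟨ext_sub M c h1, h2⟩
  · rintro ⟨h1, h2⟩
    exact ⟨(he n h1).2 (h2 ▸ ha), h2⟩

theorem Proj.sat {M I : FInterp} {S : Set (ℕ ⊕ ℕ)} {π : ℕ → ℕ} {k : ℕ} (h : Proj M I S π k)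
    (κ : Cond) (hc : ∀ x ∈ sig κ.C ∪ sig κ.D, x ∈ S) : satCond M κ ↔ satCond I κ := by
  have hk : k ≠ 0 := h.pos.ne'
  have hk' : (k : ℚ) ≠ 0 := by exact_mod_cast hk
  unfold satCond
  rw [h.card κ.D (fun x hx => hc x (by simp [hx])), h.card (.inter κ.C κ.D) hc]
  push_cast
  rw [mul_div_mul_right _ _ hk']
  simp [hk]

/-- The product interpretation: names in `S` are read in `I`, the others in `J`. -/
noncomputable def prodI (I J : FInterp) (S : Set (ℕ ⊕ ℕ)) : FInterp where
  dom := (I.dom ×ˢ J.dom).map Nat.pairEquiv.toEmbedding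
  dom_nonempty := by
    simpa using ⟨I.dom_nonempty, J.dom_nonempty⟩
  conc a := ((I.dom ×ˢ J.dom).map Nat.pairEquiv.toEmbedding).filter
    (fun n => if Sum.inl a ∈ S then n.unpair.1 ∈ I.conc a else n.unpair.2 ∈ J.conc a)
  conc_sub a := Finset.filter_subset _ _
  role r := (((I.dom ×ˢ J.dom).map Nat.pairEquiv.toEmbedding) ×ˢ
      ((I.dom ×ˢ J.dom).map Nat.pairEquiv.toEmbedding)).filter
    (fun p => if Sum.inr r ∈ S then (p.1.unpair.1, p.2.unpair.1) ∈ I.role r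
      else (p.1.unpair.2, p.2.unpair.2) ∈ J.role r)
  role_sub r := Finset.filter_subset _ _

theorem mem_prodI_dom (I J : FInterp) (S : Set (ℕ ⊕ ℕ)) (n : ℕ) :
    n ∈ (prodI I J S).dom ↔ n.unpair.1 ∈ I.dom ∧ n.unpair.2 ∈ J.dom := by
  simp only [prodI, Finset.mem_map, Finset.mem_product]
  constructor
  · rintro ⟨⟨a, b⟩, h, rfl⟩
    simpa using h
  · intro h
    exact ⟨n.unpair, h, Nat.pair_unpair n⟩

theorem proj_left (I J : FInterp) (S : Set (ℕ ⊕ ℕ)) :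
    Proj (prodI I J S) I S (fun n => n.unpair.1) J.dom.card where
  pos := Finset.card_pos.2 J.dom_nonempty
  dom n hn := ((mem_prodI_dom I J S n).1 hn).1
  fib a ha := by
    symm
    refine Finset.card_bij (fun b _ => Nat.pair a b) ?_ ?_ ?_
    · intro b hb
      simp [mem_prodI_dom, ha, hb]
    · intro b _ b' _ h
      exact (Nat.pair_eq_pair.1 h).2
    · intro n hn
      obtain ⟨h1, h2⟩ := Finset.mem_filter.1 hn
      exact ⟨n.unpair.2, ((mem_prodI_dom I J S n).1 h1).2, by rw [← h2]; simp⟩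
  conc a ha n hn := by
    change n ∈ Finset.filter _ (prodI I J S).dom ↔ _
    simp [hn, ha]
  role r hr n hn m hm := by
    change (n, m) ∈ Finset.filter _ ((prodI I J S).dom ×ˢ (prodI I J S).dom) ↔ _
    simp [hn, hm, hr]

theorem proj_right (I J : FInterp) (S : Set (ℕ ⊕ ℕ)) :
    Proj (prodI I J S) J Sᶜ (fun n => n.unpair.2) I.dom.card where
  pos := Finset.card_pos.2 I.dom_nonempty
  dom n hn := ((mem_prodI_dom I J S n).1 hn).2
  fib b hb := by
    symm
    refine Finset.card_bij (fun a _ => Nat.pair a b) ?_ ?_ ?_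
    · intro a ha
      simp [mem_prodI_dom, ha, hb]
    · intro a _ a' _ h
      exact (Nat.pair_eq_pair.1 h).1
    · intro n hn
      obtain ⟨h1, h2⟩ := Finset.mem_filter.1 hn
      exact ⟨n.unpair.1, ((mem_prodI_dom I J S n).1 h1).1, by rw [← h2]; simp⟩
  conc a ha n hn := by
    have ha' : Sum.inl a ∉ S := ha
    change n ∈ Finset.filter _ (prodI I J S).dom ↔ _
    simp [hn, ha']
  role r hr n hn m hm := by
    have hr' : Sum.inr r ∉ S := hr
    change (n, m) ∈ Finset.filter _ ((prodI I J S).dom ×ˢ (prodI I J S).dom) ↔ _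
    simp [hn, hm, hr']

/-- Independence for l-entailment. -/
theorem independence_l (K : Finset Cond) (hK : (Models K).Nonempty)
    (C D : Cpt) (l u : ℚ) (h0 : 0 ≤ l) (hlu : l ≤ u) (hu : u ≤ 1) :
    entailsL K ⟨C, D, l, u⟩ ↔
      entailsL
        (K.filter fun κ =>
          connIn ((↑(K.image fun κ' => (κ'.C, κ'.D)) : Set (Cpt × Cpt)) ∪ {(C, D)})
            (κ.C, κ.D) (C, D))
        ⟨C, D, l, u⟩ := by
  constructor
  · intro hE I hI
    obtain ⟨J, hJ⟩ := hK
    set P : Set (Cpt × Cpt) :=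
      (↑(K.image fun κ' => (κ'.C, κ'.D)) : Set (Cpt × Cpt)) ∪ {(C, D)} with hP
    have hqP : (C, D) ∈ P := by simp [hP]
    let S : Set (ℕ ⊕ ℕ) := {x | ∃ p : Cpt × Cpt,
      (p = (C, D) ∨ connIn P p (C, D)) ∧ p ∈ P ∧ x ∈ sig p.1 ∪ sig p.2}
    have hL := proj_left I J S
    have hR := proj_right I J S
    refine (hL.sat ⟨C, D, l, u⟩ (fun x hx => ⟨(C, D), Or.inl rfl, hqP, hx⟩)).1 (hE _ ?_)
    intro κ hκ
    have hκP : (κ.C, κ.D) ∈ P := by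
      refine Or.inl ?_
      exact Finset.mem_coe.2 (Finset.mem_image.2 ⟨κ, hκ, rfl⟩)
    by_cases hc : connIn P (κ.C, κ.D) (C, D)
    · exact (hL.sat κ (fun x hx => ⟨(κ.C, κ.D), Or.inr hc, hκP, hx⟩)).2
        (hI κ (Finset.mem_filter.2 ⟨hκ, hc⟩))
    · refine (hR.sat κ ?_).2 (hJ κ hκ)
      rintro x hx ⟨p, hp, hpP, hxp⟩
      apply hc
      have hd : dconn (κ.C, κ.D) p := ⟨x, Finset.mem_inter.2 ⟨hx, hxp⟩⟩
      rcases hp with rfl | hp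
      · exact Relation.TransGen.single ⟨hd, hκP, hpP⟩
      · exact Relation.TransGen.head ⟨hd, hκP, hpP⟩ hp
  · intro hE I hI
    exact hE I (fun κ hκ => hI κ (Finset.mem_filter.1 hκ).1)
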